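/- Let M(1),…,M(n) be an n-outcome POVM on ℂ^d ⊗ ℂ^k, let ξ₁, ξ₂ be density matrices on ℂ^k, let E₁, E₂ be n-outcome POVMs on ℂ^d programmed by ξ₁ and ξ₂ respectively, i.e., Tr[E_j(i)ρ] = Tr[M(i)(ρ ⊗ ξ_j)] for every density matrix ρ on ℂ^d, every outcome i, and j = 1,2, and let λ₁, λ₂ be post-processings from n outcomes to m outcomes. If λ₁⋆E₁ and λ₂⋆E₂ are both PVMs and λ₁⋆E₁ ≠ λ₂⋆E₂, then F(ξ₁,ξ₂)·F(λ₁,λ₂) = 0. -/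

import Mathlib

open scoped BigOperators Kronecker ComplexOrder Matrix

noncomputable section


namespace QProg

/-- The positive-semidefinite square root of a matrix, extended by `0` to all matrices. -/
noncomputable def matSqrt {α : Type*} [Fintype α] [DecidableEq α]
    (A : Matrix α α ℂ) : Matrix α α ℂ :=
  @dite _ A.PosSemidef (Classical.propDecidable _) (fun h =>
    (h.1.eigenvectorUnitary : Matrix α α ℂ) *
      Matrix.diagonal (Complex.ofReal ∘ Real.sqrt ∘ h.1.eigenvalues) *
      (star h.1.eigenvectorUnitary : Matrix α α ℂ)) (fun _ => 0)

/-- The fidelity `F(ρ,σ) = Tr √(√ρ σ √ρ)` of two (density) matrices. -/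
noncomputable def fid {α : Type*} [Fintype α] [DecidableEq α]
    (ρ σ : Matrix α α ℂ) : ℝ :=
  ((matSqrt (matSqrt ρ * σ * matSqrt ρ)).trace).re

/-- A density matrix: positive semidefinite with unit trace. -/
def IsDensity {α : Type*} [Fintype α] [DecidableEq α] (ρ : Matrix α α ℂ) : Prop :=
  ρ.PosSemidef ∧ ρ.trace = 1

/-- An `n`-outcome POVM: positive semidefinite effects summing to the identity. -/
def IsPOVM {α : Type*} [Fintype α] [DecidableEq α] {n : ℕ}
    (E : Fin n → Matrix α α ℂ) : Prop :=
  (∀ i, (E i).PosSemidef) ∧ ∑ i, E i = 1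

/-- The outcome distribution `p^E_ρ(i) = Tr[E(i) ρ]`. -/
noncomputable def outDist {α : Type*} [Fintype α] [DecidableEq α] {n : ℕ}
    (E : Fin n → Matrix α α ℂ) (ρ : Matrix α α ℂ) (i : Fin n) : ℝ :=
  ((E i * ρ).trace).re

/-- The Bhattacharyya coefficient `B(p,q) = ∑ᵢ √(p i) √(q i)`. -/
noncomputable def bhat {n : ℕ} (p q : Fin n → ℝ) : ℝ :=
  ∑ i, Real.sqrt (p i) * Real.sqrt (q i)

/-- `B(E₁,E₂)`: infimum of `B(p^{E₁}_{ρ₁}, p^{E₂}_{ρ₂}) / F(ρ₁,ρ₂)` over pairs of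
density matrices with nonvanishing fidelity. -/
noncomputable def obsB {α : Type*} [Fintype α] [DecidableEq α] {n : ℕ}
    (E₁ E₂ : Fin n → Matrix α α ℂ) : ℝ :=
  sInf { r : ℝ | ∃ ρ₁ ρ₂ : Matrix α α ℂ, IsDensity ρ₁ ∧ IsDensity ρ₂ ∧
    fid ρ₁ ρ₂ ≠ 0 ∧ r = bhat (outDist E₁ ρ₁) (outDist E₂ ρ₂) / fid ρ₁ ρ₂ }

/-- A post-processing from `n` outcomes to `m` outcomes. -/
def IsPostProc {n m : ℕ} (lam : Fin n → Fin m → ℝ) : Prop :=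
  (∀ i y, 0 ≤ lam i y) ∧ ∀ i, ∑ y, lam i y = 1

/-- The action `(λ⋆E)(y) = ∑ᵢ λ(i|y) E(i)` of a post-processing on a POVM. -/
noncomputable def ppStar {α : Type*} [Fintype α] [DecidableEq α] {n m : ℕ}
    (lam : Fin n → Fin m → ℝ) (E : Fin n → Matrix α α ℂ) (y : Fin m) :
    Matrix α α ℂ :=
  ∑ i, (lam i y : ℂ) • E i

/-- The action `(λ⋆p)(y) = ∑ᵢ λ(i|y) p(i)` of a post-processing on a probability vector. -/
noncomputable def ppStarVec {n m : ℕ} (lam : Fin n → Fin m → ℝ) (p : Fin n → ℝ)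
    (y : Fin m) : ℝ :=
  ∑ i, lam i y * p i

/-- A probability vector on `{1,…,n}`. -/
def IsProbVec {n : ℕ} (p : Fin n → ℝ) : Prop :=
  (∀ i, 0 ≤ p i) ∧ ∑ i, p i = 1

/-- `F(λ₁,λ₂)`: infimum of `B(λ₁⋆p, λ₂⋆p)` over probability vectors `p`. -/
noncomputable def ppF {n m : ℕ} (lam₁ lam₂ : Fin n → Fin m → ℝ) : ℝ :=
  sInf { r : ℝ | ∃ p : Fin n → ℝ, IsProbVec p ∧
    r = bhat (ppStarVec lam₁ p) (ppStarVec lam₂ p) }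

/-- A PVM (sharp observable): a POVM all of whose effects are projections. -/
def IsPVM {α : Type*} [Fintype α] [DecidableEq α] {n : ℕ}
    (E : Fin n → Matrix α α ℂ) : Prop :=
  IsPOVM E ∧ ∀ i, E i * E i = E i

theorem matSqrt_herm {α : Type*} [Fintype α] [DecidableEq α] {A : Matrix α α ℂ}
    (h : A.PosSemidef) : (matSqrt A)ᴴ = matSqrt A := by
  rw [matSqrt, dif_pos h]
  rw [Matrix.conjTranspose_mul, Matrix.conjTranspose_mul, Matrix.diagonal_conjTranspose,
    Matrix.star_eq_conjTranspose, Matrix.conjTranspose_conjTranspose, Matrix.mul_assoc]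
  congr 3
  ext i
  simp

theorem matSqrt_sq {α : Type*} [Fintype α] [DecidableEq α] {A : Matrix α α ℂ}
    (h : A.PosSemidef) : matSqrt A * matSqrt A = A := by
  rw [matSqrt, dif_pos h]
  have hs := h.1.spectral_theorem
  rw [Unitary.conjStarAlgAut_apply] at hs
  have hu : (star h.1.eigenvectorUnitary : Matrix α α ℂ) * (h.1.eigenvectorUnitary : Matrix α α ℂ) = 1 :=
    Unitary.coe_star_mul_self _
  conv_rhs => rw [hs]
  generalize (h.1.eigenvectorUnitary : Matrix α α ℂ) = U at *
  set D := Matrix.diagonal (Complex.ofReal ∘ Real.sqrt ∘ h.1.eigenvalues) with hD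
  have hDD : D * D = Matrix.diagonal (RCLike.ofReal ∘ h.1.eigenvalues) := by
    rw [hD, Matrix.diagonal_mul_diagonal]
    congr 1
    ext i
    simp only [Function.comp]
    rw [← Complex.ofReal_mul, Real.mul_self_sqrt (h.eigenvalues_nonneg i)]
    rfl
  rw [← hDD]
  calc U * D * star U * (U * D * star U) = U * D * (star U * U) * D * star U := by
        simp only [Matrix.mul_assoc]
    _ = _ := by rw [hu]; simp only [Matrix.mul_assoc, Matrix.one_mul]

theorem psd_factor {α : Type*} [Fintype α] [DecidableEq α] {A : Matrix α α ℂ}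
    (h : A.PosSemidef) : ∃ X : Matrix α α ℂ, A = Xᴴ * X :=
  ⟨matSqrt A, by rw [matSqrt_herm h, matSqrt_sq h]⟩

theorem psd_mul_factor {α : Type*} [Fintype α] [DecidableEq α] {A B : Matrix α α ℂ}
    (hA : A.PosSemidef) (hB : B.PosSemidef) :
    0 ≤ (A * B).trace ∧ ((A * B).trace = 0 → A * B = 0) := by
  obtain ⟨X, rfl⟩ := psd_factor hA
  obtain ⟨Y, hY⟩ := psd_factor hB
  have key : (Xᴴ * X * B).trace = ((X * Yᴴ) * (X * Yᴴ)ᴴ).trace := by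
    rw [hY, Matrix.conjTranspose_mul, Matrix.conjTranspose_conjTranspose]
    simp only [Matrix.mul_assoc]
    rw [Matrix.trace_mul_comm]
    simp only [Matrix.mul_assoc]
  refine ⟨?_, fun h => ?_⟩
  · rw [key]
    exact (Matrix.posSemidef_self_mul_conjTranspose _).trace_nonneg
  · rw [key, Matrix.trace_mul_conjTranspose_self_eq_zero_iff] at h
    rw [hY, show Xᴴ * X * (Yᴴ * Y) = Xᴴ * (X * Yᴴ) * Y by simp only [Matrix.mul_assoc], h]
    simp

theorem matSqrt_zero {α : Type*} [Fintype α] [DecidableEq α] :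
    matSqrt (0 : Matrix α α ℂ) = 0 := by
  have h := Matrix.PosSemidef.zero (n := α) (R := ℂ)
  have h2 := matSqrt_sq h
  have h1 := matSqrt_herm h
  nth_rw 1 [← h1] at h2
  exact Matrix.conjTranspose_mul_self_eq_zero.1 h2

theorem fid_zero {α : Type*} [Fintype α] [DecidableEq α] {ρ σ : Matrix α α ℂ}
    (hρ : ρ.PosSemidef) (h : ρ * σ = 0) : fid ρ σ = 0 := by
  have h2 := matSqrt_sq hρ
  have h1 := matSqrt_herm hρ
  have : matSqrt ρ * σ = 0 := by
    rw [← Matrix.conjTranspose_mul_self_eq_zero, Matrix.conjTranspose_mul, h1,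
      show σᴴ * matSqrt ρ * (matSqrt ρ * σ) = σᴴ * ((matSqrt ρ * matSqrt ρ) * σ) by
        simp only [Matrix.mul_assoc], h2, h, Matrix.mul_zero]
  rw [fid, this, Matrix.zero_mul, matSqrt_zero]
  simp

theorem prog_psd {d k n : ℕ}
    {M : Fin n → Matrix (Fin d × Fin k) (Fin d × Fin k) ℂ}
    {ξ : Matrix (Fin k) (Fin k) ℂ} {E : Fin n → Matrix (Fin d) (Fin d) ℂ}
    (hprog : ∀ ρ : Matrix (Fin d) (Fin d) ℂ, IsDensity ρ →
      ∀ i, (E i * ρ).trace = (M i * (ρ ⊗ₖ ξ)).trace)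
    {ρ : Matrix (Fin d) (Fin d) ℂ} (hρ : ρ.PosSemidef) (i : Fin n) :
    (E i * ρ).trace = (M i * (ρ ⊗ₖ ξ)).trace := by
  by_cases h0 : ρ.trace = 0
  · rw [hρ.trace_eq_zero_iff] at h0
    subst h0
    simp
  · have h := hprog (ρ.trace⁻¹ • ρ) ⟨hρ.smul (inv_nonneg.2 hρ.trace_nonneg), by
      rw [Matrix.trace_smul, smul_eq_mul, inv_mul_cancel₀ h0]⟩ i
    rw [Matrix.smul_kronecker, Matrix.mul_smul, Matrix.mul_smul, Matrix.trace_smul,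
      Matrix.trace_smul, smul_eq_mul, smul_eq_mul] at h
    exact mul_left_cancel₀ (inv_ne_zero h0) h

/-- If outcome `i` occurs with nonzero weight on a state where `λ⋆E` yields `y` with certainty,
then `λ(i|y) = 1`. -/
theorem lam_eq_one {d n m : ℕ} {E : Fin n → Matrix (Fin d) (Fin d) ℂ} (hE : IsPOVM E)
    {lam : Fin n → Fin m → ℝ} (hlam : IsPostProc lam) (y : Fin m)
    (hpsd : (ppStar lam E y).PosSemidef)
    (hproj : ppStar lam E y * ppStar lam E y = ppStar lam E y) (i : Fin n)
    (hi : (E i * ppStar lam E y).trace ≠ 0) : lam i y = 1 := by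
  set A := ppStar lam E y with hA
  have hle : ∀ j, lam j y ≤ 1 := fun j => by
    rw [← hlam.2 j]
    exact Finset.single_le_sum (fun w _ => hlam.1 j w) (Finset.mem_univ y)
  have hs : ∑ j, ((1 - lam j y : ℝ) : ℂ) * (E j * A).trace = 0 := by
    have h1 : ∑ j, (E j * A).trace = A.trace := by
      rw [← Matrix.trace_sum, ← Finset.sum_mul, hE.2, Matrix.one_mul]
    have h2 : ∑ j, (lam j y : ℂ) * (E j * A).trace = A.trace := by
      conv_rhs => rw [← hproj]
      nth_rw 2 [hA]
      rw [ppStar, Finset.sum_mul, Matrix.trace_sum]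
      simp
    push_cast
    simp only [sub_mul, one_mul, Finset.sum_sub_distrib, h1, h2, sub_self]
  have hz := (Finset.sum_eq_zero_iff_of_nonneg (fun j _ => mul_nonneg
    (Complex.zero_le_real.2 (sub_nonneg.2 (hle j))) (psd_mul_factor (hE.1 j) hpsd).1)).1 hs i
    (Finset.mem_univ i)
  have := (mul_eq_zero.1 hz).resolve_right hi
  have h3 : (1 - lam i y : ℝ) = 0 := by exact_mod_cast this
  linarith

theorem lam_eq_zero {n m : ℕ} {lam : Fin n → Fin m → ℝ} (hlam : IsPostProc lam) {i : Fin n}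
    {y w : Fin m} (h : lam i y = 1) (hw : w ≠ y) : lam i w = 0 := by
  have h1 := hlam.2 i
  rw [← Finset.add_sum_erase _ _ (Finset.mem_univ y), h] at h1
  have h2 : ∑ x ∈ Finset.univ.erase y, lam i x = 0 := by linarith
  exact (Finset.sum_eq_zero_iff_of_nonneg (fun x _ => hlam.1 i x)).1 h2 w
    (Finset.mem_erase.2 ⟨hw, Finset.mem_univ _⟩)

theorem kron_eq_zero {a b : Type*} {A : Matrix a a ℂ} {B : Matrix b b ℂ} (h : A ⊗ₖ B = 0)
    (hA : A ≠ 0) : B = 0 := by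
  have : ∃ i j, A i j ≠ 0 := by
    by_contra! hc
    exact hA (by ext i j; exact hc i j)
  obtain ⟨i, j, hij⟩ := this
  ext x w
  have h1 := congrFun (congrFun h (i, x)) (j, w)
  rw [Matrix.kronecker_apply] at h1
  exact (mul_eq_zero.1 h1).resolve_left hij

/-- realizing two different sharp observables by post-processing assisted
programming forces `F(ξ₁,ξ₂) F(λ₁,λ₂) = 0`. -/
theorem sharp_postprocessing_no_go {d k n m : ℕ}
    (M : Fin n → Matrix (Fin d × Fin k) (Fin d × Fin k) ℂ) (hM : IsPOVM M)
    (ξ₁ ξ₂ : Matrix (Fin k) (Fin k) ℂ) (hξ₁ : IsDensity ξ₁) (hξ₂ : IsDensity ξ₂)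
    (E₁ E₂ : Fin n → Matrix (Fin d) (Fin d) ℂ) (hE₁ : IsPOVM E₁) (hE₂ : IsPOVM E₂)
    (hprog₁ : ∀ ρ : Matrix (Fin d) (Fin d) ℂ, IsDensity ρ →
      ∀ i, (E₁ i * ρ).trace = (M i * (ρ ⊗ₖ ξ₁)).trace)
    (hprog₂ : ∀ ρ : Matrix (Fin d) (Fin d) ℂ, IsDensity ρ →
      ∀ i, (E₂ i * ρ).trace = (M i * (ρ ⊗ₖ ξ₂)).trace)
    (lam₁ lam₂ : Fin n → Fin m → ℝ) (hlam₁ : IsPostProc lam₁) (hlam₂ : IsPostProc lam₂)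
    (hsharp₁ : IsPVM (ppStar lam₁ E₁)) (hsharp₂ : IsPVM (ppStar lam₂ E₂))
    (hne : ppStar lam₁ E₁ ≠ ppStar lam₂ E₂) :
    fid ξ₁ ξ₂ * ppF lam₁ lam₂ = 0 := by
  set A := ppStar lam₁ E₁ with hA
  set B := ppStar lam₂ E₂ with hB
  have hyz : ∃ y z, y ≠ z ∧ A y * B z ≠ 0 := by
    by_contra! hc
    apply hne
    funext y
    have h1 : A y = A y * B y := by
      conv_lhs => rw [← Matrix.mul_one (A y), ← hsharp₂.1.2, Finset.mul_sum]
      exact Finset.sum_eq_single y (fun z _ hz => hc y z hz.symm) (by simp)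
    have h2 : B y = A y * B y := by
      conv_lhs => rw [← Matrix.one_mul (B y), ← hsharp₁.1.2, Finset.sum_mul]
      exact Finset.sum_eq_single y (fun z _ hz => hc z y hz) (by simp)
    rw [h1, ← h2]
  obtain ⟨y, z, hne', hAB⟩ := hyz
  have hAp := hsharp₁.1.1 y
  have hBp := hsharp₂.1.1 z
  by_cases hex : ∃ i, (E₁ i * A y).trace ≠ 0 ∧ (E₂ i * B z).trace ≠ 0
  · obtain ⟨i, hi1, hi2⟩ := hex
    have l1 := lam_eq_one hE₁ hlam₁ y hAp (hsharp₁.2 y) i hi1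
    have l2 := lam_eq_one hE₂ hlam₂ z hBp (hsharp₂.2 z) i hi2
    have hF : ppF lam₁ lam₂ = 0 := by
      apply le_antisymm
      · apply csInf_le
        · refine ⟨0, ?_⟩
          rintro r ⟨p, -, rfl⟩
          exact Finset.sum_nonneg (fun w _ => mul_nonneg (Real.sqrt_nonneg _) (Real.sqrt_nonneg _))
        · refine ⟨Pi.single i 1, ⟨fun j => ?_, by simp⟩, ?_⟩
          · by_cases hj : j = i
            · subst hj; simp
            · simp [hj]
          · symm
            apply Finset.sum_eq_zero
            intro w _
            have e1 : ppStarVec lam₁ (Pi.single i 1) w = lam₁ i w := by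
              simp [ppStarVec, Pi.single_apply]
            have e2 : ppStarVec lam₂ (Pi.single i 1) w = lam₂ i w := by
              simp [ppStarVec, Pi.single_apply]
            rw [e1, e2]
            by_cases hw : w = y
            · rw [lam_eq_zero hlam₂ l2 (hw ▸ hne')]; simp
            · rw [lam_eq_zero hlam₁ l1 hw]; simp
      · apply Real.sInf_nonneg
        rintro r ⟨p, -, rfl⟩
        exact Finset.sum_nonneg (fun w _ => mul_nonneg (Real.sqrt_nonneg _) (Real.sqrt_nonneg _))
    rw [hF, mul_zero]
  · push Not at hex
    have hK1 := hAp.kronecker hξ₁.1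
    have hK2 := hBp.kronecker hξ₂.1
    have hz : ∀ i, (A y ⊗ₖ ξ₁) * M i * (B z ⊗ₖ ξ₂) = 0 := by
      intro i
      by_cases h : (E₁ i * A y).trace = 0
      · rw [prog_psd hprog₁ hAp, Matrix.trace_mul_comm] at h
        rw [(psd_mul_factor hK1 (hM.1 i)).2 h, Matrix.zero_mul]
      · have h2 := hex i h
        rw [prog_psd hprog₂ hBp] at h2
        rw [Matrix.mul_assoc, (psd_mul_factor (hM.1 i) hK2).2 h2, Matrix.mul_zero]
    have hzero : (A y * B z) ⊗ₖ (ξ₁ * ξ₂) = 0 := by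
      rw [Matrix.mul_kronecker_mul, ← Matrix.mul_one (A y ⊗ₖ ξ₁), ← hM.2, Finset.mul_sum,
        Finset.sum_mul]
      exact Finset.sum_eq_zero (fun i _ => hz i)
    rw [fid_zero hξ₁.1 (kron_eq_zero hzero hAB), zero_mul]
end QProg
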